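/- (Hardness from harmonic to egalitarian welfare.) For every ε > 0 there exists n₀ ∈ ℕ such that for every n ≥ n₀, every real p ≤ −1, and every deterministic online algorithm A for n agents, there exists an instance v with unit monopolist utilities such that OPT_p(v) ≥ n^{1/2 − ε} · ALG_{A,p}(v). -/

import Mathlib

/-!
Put `S = ⌊√n⌋` and `α = -1 / p ∈ (0, 1]`. The adversary arranges `S ^ 2` agents in `S` groups of `S`;
every remaining agent is an outsider who values only a private item, worth `1`.

The first `S` items are group items: item `j` is worth `x = S ^ (-α) / 2` to each agent of group `j`.
Then come `S` rounds with one item each, valued by all current survivors. After every round but the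
last, the survivor to whom the algorithm has given most so far is eliminated from each group. The
item of round `l` is worth `(1 - x) * (((S - l) / S) ^ α - ((S - l - 1) / S) ^ α) ≤ S ^ (-α)`
(subadditivity of `z ↦ z ^ α`), so an agent eliminated after `t` rounds has
`(1 - x) * ((S - t) / S) ^ α` of its unit total left, which becomes the value of a private item at
the end. The `S` final survivors, one per group, have nothing left.

*The algorithm.* Eliminating best-off agents does not increase the survivors' average utility, and
the item of round `l` is shared by `S * (S - l)` survivors. With `H = ∑ l < S, 1 / (S - l)`, the
final survivors therefore average at most `S ^ (-α) * (2 + H) / S` (`exists_schedule`). By convexity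
of `z ↦ z ^ p` this caps the welfare by `(n / S) ^ α` times that average
(`pMeanWelfare_le_of_subset`), hence by `4 * (2 + H) / S`.

*The optimum.* In hindsight each final survivor takes its group item and everyone else takes a
private item. An agent eliminated after `t` rounds contributes at most `2 ^ (-p) * S / (S - t)` to
the sum of `p`-th powers, and each final survivor at most `2 ^ (-p) * S`, so the mean of the `p`-th
powers is at most `2 ^ (-p) * (2 + H)` and the optimum is at least `1 / (2 * (2 + H))`.

Both bounds are in `exists_instance`. The ratio is at least `S / (8 * (2 + H) ^ 2)`, which exceeds
`n ^ (1 / 2 - ε)` for large `n` because `H ≤ 1 + log n`.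
-/

open Real

/-- The `p`-mean welfare of a utility profile, taken to be `0` when `p < 0`
and some utility is zero. -/
noncomputable def pMeanWelfare (n : ℕ) (p : ℝ) (u : Fin n → ℝ) : ℝ :=
  if p < 0 ∧ ∃ a, u a = 0 then 0
  else ((1 / (n : ℝ)) * ∑ a, u a ^ p) ^ (1 / p)

/-- The optimal `p`-mean welfare over all feasible (fractional) allocations. -/
noncomputable def OPTwelfare (n m : ℕ) (p : ℝ) (v : Fin m → Fin n → ℝ) : ℝ :=
  sSup { w : ℝ | ∃ y : Fin m → Fin n → ℝ,
    (∀ k a, 0 ≤ y k a) ∧ (∀ k, ∑ a, y k a ≤ 1) ∧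
    w = pMeanWelfare n p (fun a => ∑ k, v k a * y k a) }

/-- The utilities produced by a deterministic online algorithm `A` on instance `v`:
item `k` is allocated according to `A k` applied to the value history of items `0,…,k`. -/
noncomputable def onlineUtilities (n m : ℕ)
    (A : (k : ℕ) → (Fin (k + 1) → Fin n → ℝ) → (Fin n → ℝ))
    (v : Fin m → Fin n → ℝ) : Fin n → ℝ :=
  fun a => ∑ k : Fin m, v k a *
    A k.1 (fun i : Fin (k.1 + 1) => v (Fin.castLE k.isLt i)) a

/-- The `p`-mean welfare achieved by the online algorithm `A` on instance `v`. -/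
noncomputable def ALGwelfare (n m : ℕ) (p : ℝ)
    (A : (k : ℕ) → (Fin (k + 1) → Fin n → ℝ) → (Fin n → ℝ))
    (v : Fin m → Fin n → ℝ) : ℝ :=
  pMeanWelfare n p (onlineUtilities n m A v)

/-! ### The elimination adversary -/

/-- The utility agent `a` collects from items `0, …, K - 1` of the infinite value stream `w`
when these are allocated online by `A`. -/
noncomputable def utilUpTo {n : ℕ} (A : (k : ℕ) → (Fin (k + 1) → Fin n → ℝ) → (Fin n → ℝ))
    (w : ℕ → Fin n → ℝ) (K : ℕ) (a : Fin n) : ℝ :=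
  ∑ k ∈ Finset.range K, w k a * A k (fun i => w i) a

/-- The adversarial stream. Agent `a` belongs to group `a / S` (agents with `S ≤ a / S` are
outsiders). Item `k < S` is worth `x` to the agents of group `k` and nothing to the others;
item `S + l` is worth `d l` to the agents that survive more than `l` elimination rounds, where
`τ a` is the number of rounds that agent `a` takes part in. -/
noncomputable def advItem {n : ℕ} (S : ℕ) (x : ℝ) (d : ℕ → ℝ) (τ : Fin n → ℕ)
    (k : ℕ) (a : Fin n) : ℝ :=
  if k < S then (if a.1 / S = k then x else 0) else (if k - S < τ a then d (k - S) else 0)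

lemma utilUpTo_congr {n : ℕ} (A : (k : ℕ) → (Fin (k + 1) → Fin n → ℝ) → (Fin n → ℝ))
    {w w' : ℕ → Fin n → ℝ} {K : ℕ} (h : ∀ k < K, w k = w' k) (a : Fin n) :
    utilUpTo A w K a = utilUpTo A w' K a := by
  unfold utilUpTo
  refine Finset.sum_congr rfl fun k hk => ?_
  have hk' := Finset.mem_range.1 hk
  have : (fun i : Fin (k + 1) => w i) = fun i : Fin (k + 1) => w' i := by
    funext i
    exact h i (by omega)
  rw [this, h k hk']

lemma card_group {n S j : ℕ} (hS : 0 < S) (hn : S * S ≤ n) (hj : j < S) :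
    (Finset.univ.filter fun a : Fin n => a.1 / S = j).card = S := by
  have hlt : ∀ i : Fin S, j * S + i.1 < n := by
    intro i
    have : (j + 1) * S ≤ S * S := Nat.mul_le_mul_right _ hj
    have := i.2
    nlinarith
  have : (Finset.univ.filter fun a : Fin n => a.1 / S = j)
      = Finset.univ.image (fun i : Fin S => (⟨j * S + i.1, hlt i⟩ : Fin n)) := by
    ext a
    simp only [Finset.mem_filter, Finset.mem_univ, true_and, Finset.mem_image]
    constructor
    · intro h
      refine ⟨⟨a.1 % S, Nat.mod_lt _ hS⟩, ?_⟩
      ext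
      simp only
      rw [← h, mul_comm]
      exact Nat.div_add_mod _ _
    · rintro ⟨i, rfl⟩
      simp only
      rw [mul_comm, Nat.mul_add_div hS, Nat.div_eq_of_lt i.2, add_zero]
  rw [this, Finset.card_image_of_injective]
  · simp
  · intro i i' h
    simp only [Fin.mk.injEq] at h
    ext
    omega

/-- Removing a maximal element of a finite family does not increase its average. -/
lemma sum_erase_max {ι : Type*} [DecidableEq ι] (s : Finset ι) (f : ι → ℝ) (m : ι) (hm : m ∈ s)
    (hmax : ∀ a ∈ s, f a ≤ f m) :
    (s.card : ℝ) * ∑ a ∈ s.erase m, f a ≤ ((s.card : ℝ) - 1) * ∑ a ∈ s, f a := by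
  have h1 : ∑ a ∈ s, f a ≤ s.card * f m := by
    simpa using Finset.sum_le_card_nsmul s f (f m) hmax
  have h2 := Finset.add_sum_erase s f hm
  nlinarith

/-- A single item worth at most `D` to everyone adds at most `D` to the total utility of any set
of agents. -/
lemma sum_utilUpTo_succ_le {n : ℕ} (A : (k : ℕ) → (Fin (k + 1) → Fin n → ℝ) → (Fin n → ℝ))
    (hA : ∀ k h, (∀ a, 0 ≤ A k h a) ∧ ∑ a, A k h a ≤ 1) (w : ℕ → Fin n → ℝ) (K : ℕ) {D : ℝ}
    (hD : 0 ≤ D) (hw : ∀ a, w K a ≤ D) (R : Finset (Fin n)) :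
    ∑ a ∈ R, utilUpTo A w (K + 1) a ≤ ∑ a ∈ R, utilUpTo A w K a + D := by
  have h1 : ∑ a ∈ R, utilUpTo A w (K + 1) a
      = ∑ a ∈ R, utilUpTo A w K a + ∑ a ∈ R, w K a * A K (fun k => w k) a := by
    rw [← Finset.sum_add_distrib]
    refine Finset.sum_congr rfl fun a _ => ?_
    unfold utilUpTo
    rw [Finset.sum_range_succ]
  rw [h1]
  refine add_le_add le_rfl ?_
  calc _ ≤ ∑ a ∈ R, D * A K (fun k => w k) a :=
        Finset.sum_le_sum fun a _ => mul_le_mul_of_nonneg_right (hw a) ((hA _ _).1 a)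
    _ ≤ ∑ a, D * A K (fun k => w k) a :=
        Finset.sum_le_univ_sum_of_nonneg fun a => mul_nonneg hD ((hA _ _).1 a)
    _ ≤ D := by
        rw [← Finset.mul_sum]
        exact mul_le_of_le_one_right hD (hA _ _).2

/-- Eliminating, in every group, the currently best-off surviving agent after each round:
after `i` rounds there is an elimination schedule `τ` (survivors have `τ a = S`, outsiders
`τ a = 0`) for which the average utility of the survivors is at most
`x / S + ∑ l < i, d l / (S * (S - l))`. -/
lemma exists_schedule {n S : ℕ} (A : (k : ℕ) → (Fin (k + 1) → Fin n → ℝ) → (Fin n → ℝ))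
    (hA : ∀ k h, (∀ a, 0 ≤ A k h a) ∧ ∑ a, A k h a ≤ 1)
    (hS : 0 < S) (hn : S * S ≤ n) (x : ℝ) (hx : 0 ≤ x) (d : ℕ → ℝ) (hd : ∀ l, 0 ≤ d l) (i : ℕ)
    (hi : i < S) :
    ∃ τ : Fin n → ℕ,
      (∀ a, S ≤ a.1 / S → τ a = 0) ∧
      (∀ a, a.1 / S < S → τ a = S ∨ (1 ≤ τ a ∧ τ a ≤ i)) ∧
      (∀ l, 1 ≤ l → l ≤ i → (Finset.univ.filter fun a => τ a = l).card = S) ∧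
      (∀ j < S, ((Finset.univ.filter fun a => τ a = S).filter fun a => a.1 / S = j).card
        = S - i) ∧
      ∑ a ∈ Finset.univ.filter (fun a => τ a = S), utilUpTo A (advItem S x d τ) (S + i) a
        ≤ S * ((S : ℝ) - i) *
          (x / S + ∑ l ∈ Finset.range i, d l / (S * ((S : ℝ) - l))) := by
  have hSR : (0 : ℝ) < S := by exact_mod_cast hS
  induction i with
  | zero =>
    refine ⟨fun a => if a.1 / S < S then S else 0, ?_, ?_, ?_, ?_, ?_⟩
    · intro a ha
      simp [not_lt.2 ha]
    · intro a ha
      simp [ha]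
    · intro l h1 h2
      omega
    · intro j hj
      rw [Nat.sub_zero, Finset.filter_filter]
      refine Eq.trans ?_ (card_group hS hn hj)
      congr 1
      ext a
      simp only [Finset.mem_filter, Finset.mem_univ, true_and]
      constructor
      · exact fun h => h.2
      · intro h
        simp [h, hj]
    · set τ : Fin n → ℕ := fun a => if a.1 / S < S then S else 0
      have hw : ∀ k < S, ∀ a, 0 ≤ advItem S x d τ k a ∧ advItem S x d τ k a ≤ x := by
        intro k hk a
        simp only [advItem, hk, if_true]
        split_ifs <;> simp [hx]
      calc ∑ a ∈ Finset.univ.filter (fun a => τ a = S), utilUpTo A (advItem S x d τ) (S + 0) a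
          ≤ ∑ a, utilUpTo A (advItem S x d τ) (S + 0) a := by
            refine Finset.sum_le_univ_sum_of_nonneg fun a => ?_
            refine Finset.sum_nonneg fun k hk => mul_nonneg (hw k (by simpa using hk) a).1 ?_
            exact (hA k _).1 a
        _ = ∑ k ∈ Finset.range S, ∑ a, advItem S x d τ k a
              * A k (fun i => advItem S x d τ i) a := by
            simp only [utilUpTo, Nat.add_zero]
            rw [Finset.sum_comm]
        _ ≤ ∑ k ∈ Finset.range S, x := by
            refine Finset.sum_le_sum fun k hk => ?_
            calc _ ≤ ∑ a, x * A k (fun i => advItem S x d τ i) a :=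
                  Finset.sum_le_sum fun a _ => mul_le_mul_of_nonneg_right
                    (hw k (by simpa using hk) a).2 ((hA k _).1 a)
              _ ≤ x := by
                  rw [← Finset.mul_sum]
                  exact mul_le_of_le_one_right hx (hA k _).2
        _ = _ := by
            simp
            field_simp
  | succ i ih =>
    obtain ⟨τ, hout, hin, hcard, hgrp, hsum⟩ := ih (by omega)
    set R := Finset.univ.filter fun a => τ a = S with hR
    set f := utilUpTo A (advItem S x d τ) (S + i + 1) with hf
    have hpos : 0 < n := lt_of_lt_of_le (Nat.mul_pos hS hS) hn
    have : Nonempty (Fin n) := ⟨⟨0, hpos⟩⟩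
    have hex : ∀ j, j < S → ∃ m ∈ R.filter (fun a => a.1 / S = j),
        ∀ a ∈ R.filter (fun a => a.1 / S = j), f a ≤ f m := by
      intro j hj
      refine Finset.exists_max_image _ _ (Finset.card_pos.1 ?_)
      rw [hgrp j hj]
      omega
    choose! m hm hmax using hex
    have hmS : ∀ j < S, τ (m j) = S := fun j hj => by
      have := hm j hj
      simp only [hR, Finset.mem_filter, Finset.mem_univ, true_and] at this
      exact this.1
    have hmg : ∀ j < S, (m j).1 / S = j := fun j hj => (Finset.mem_filter.1 (hm j hj)).2
    have hRlt : ∀ a ∈ R, a.1 / S < S := by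
      intro a ha
      by_contra hc
      have h0 := hout a (not_lt.1 hc)
      have : τ a = S := by simpa [hR] using ha
      omega
    set τ' : Fin n → ℕ := fun a => if a = m (a.1 / S) ∧ a.1 / S < S then i + 1 else τ a with hτ'
    have hel : ∀ a, a = m (a.1 / S) ∧ a.1 / S < S → τ a = S := by
      rintro a ⟨h1, h2⟩
      rw [h1]
      exact hmS _ h2
    -- the change of schedule is invisible on the items presented so far
    have hcongr : ∀ k < S + i + 1, advItem S x d τ' k = advItem S x d τ k := by
      intro k hk
      funext a
      unfold advItem
      by_cases hkS : k < S
      · simp [hkS]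
      · simp only [hkS, if_false]
        by_cases ha : a = m (a.1 / S) ∧ a.1 / S < S
        · have h1 : τ' a = i + 1 := by simp only [hτ']; rw [if_pos ha]
          rw [h1, hel a ha, if_pos (by omega), if_pos (by omega)]
        · have h1 : τ' a = τ a := by simp only [hτ']; rw [if_neg ha]
          rw [h1]
    have hR' : ∀ j < S, (Finset.univ.filter fun a => τ' a = S).filter (fun a => a.1 / S = j)
        = (R.filter fun a => a.1 / S = j).erase (m j) := by
      intro j hj
      ext a
      simp only [Finset.mem_filter, Finset.mem_univ, true_and, Finset.mem_erase, hR]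
      by_cases ha : a = m (a.1 / S) ∧ a.1 / S < S
      · have h1 : τ' a = i + 1 := by simp only [hτ']; rw [if_pos ha]
        rw [h1]
        constructor
        · rintro ⟨h, _⟩; omega
        · rintro ⟨h, _, h3⟩
          exact absurd (h3 ▸ ha.1) h
      · have h1 : τ' a = τ a := by simp only [hτ']; rw [if_neg ha]
        rw [h1]
        constructor
        · rintro ⟨h, h3⟩
          refine ⟨fun hc => ha ?_, h, h3⟩
          rw [h3]; exact ⟨hc, hj⟩
        · rintro ⟨_, h⟩; exact h
    refine ⟨τ', ?_, ?_, ?_, ?_, ?_⟩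
    · intro a ha
      simp only [hτ']
      rw [if_neg (by omega), hout a ha]
    · intro a ha
      simp only [hτ']
      split_ifs
      · right; omega
      · rcases hin a ha with h | h
        · exact Or.inl h
        · right; omega
    · intro l hl1 hl2
      by_cases hl : l = i + 1
      · have : (Finset.univ.filter fun a => τ' a = l) = (Finset.range S).image m := by
          ext a
          simp only [Finset.mem_filter, Finset.mem_univ, true_and, Finset.mem_image,
            Finset.mem_range]
          constructor
          · intro h
            by_cases ha : a = m (a.1 / S) ∧ a.1 / S < S
            · exact ⟨_, ha.2, ha.1.symm⟩
            · have h1 : τ' a = τ a := by simp only [hτ']; rw [if_neg ha]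
              by_cases hlt : a.1 / S < S
              · rcases hin a hlt with h2 | h2 <;> omega
              · have := hout a (not_lt.1 hlt)
                omega
          · rintro ⟨j, hj, rfl⟩
            simp only [hτ']
            rw [hmg j hj, if_pos ⟨rfl, hj⟩, hl]
        rw [this, Finset.card_image_of_injOn, Finset.card_range]
        intro j hj j' hj' h
        have hj1 : j < S := by simpa using hj
        have hj2 : j' < S := by simpa using hj'
        rw [← hmg j hj1, ← hmg j' hj2]
        rw [h]
      · rw [← hcard l hl1 (by omega)]
        congr 1
        ext a
        simp only [Finset.mem_filter, Finset.mem_univ, true_and]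
        by_cases ha : a = m (a.1 / S) ∧ a.1 / S < S
        · have h1 : τ' a = i + 1 := by simp only [hτ']; rw [if_pos ha]
          have h2 := hel a ha
          omega
        · have h1 : τ' a = τ a := by simp only [hτ']; rw [if_neg ha]
          rw [h1]
    · intro j hj
      rw [hR' j hj, Finset.card_erase_of_mem (hm j hj), hgrp j hj]
      omega
    · have hRlt' : ∀ a ∈ Finset.univ.filter (fun a => τ' a = S), a.1 / S ∈ Finset.range S := by
        intro a ha
        rw [Finset.mem_range]
        by_contra hc
        have h1 : τ' a = τ a := by simp only [hτ']; rw [if_neg (by omega)]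
        have h0 := hout a (not_lt.1 hc)
        have : τ' a = S := by simpa using ha
        omega
      have hSi : (0 : ℝ) < (S : ℝ) - i := by
        have : (i : ℝ) + 1 < S := by exact_mod_cast hi
        linarith
      -- the round-`i` item adds at most `d i` to the survivors' total
      have hround : ∑ a ∈ R, f a ≤ S * ((S : ℝ) - i) *
          (x / S + ∑ l ∈ Finset.range i, d l / (S * ((S : ℝ) - l))) + d i := by
        refine (sum_utilUpTo_succ_le A hA _ _ (hd i) (fun a => ?_) R).trans
          (add_le_add_left hsum _)
        unfold advItem
        rw [if_neg (by omega), Nat.add_sub_cancel_left]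
        split_ifs
        · exact le_rfl
        · exact hd i
      have hshrink : ((S : ℝ) - i) * ∑ a ∈ Finset.univ.filter (fun a => τ' a = S), f a
          ≤ ((S : ℝ) - i - 1) * ∑ a ∈ R, f a := by
        rw [← Finset.sum_fiberwise_of_maps_to hRlt',
          ← Finset.sum_fiberwise_of_maps_to (s := R) (t := Finset.range S)
            (g := fun a : Fin n => a.1 / S) (fun a ha => Finset.mem_range.2 (hRlt a ha)),
          Finset.mul_sum, Finset.mul_sum]
        refine Finset.sum_le_sum fun j hj => ?_
        have hj := Finset.mem_range.1 hj
        have := sum_erase_max _ f (m j) (hm j hj) (hmax j hj)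
        rw [hgrp j hj, Nat.cast_sub (by omega)] at this
        rw [hR' j hj]
        exact this
      have heq : ∑ a ∈ Finset.univ.filter (fun a => τ' a = S),
          utilUpTo A (advItem S x d τ') (S + (i + 1)) a
          = ∑ a ∈ Finset.univ.filter (fun a => τ' a = S), f a :=
        Finset.sum_congr rfl fun a _ => utilUpTo_congr A hcongr a
      rw [heq, Finset.sum_range_succ]
      set B := x / S + ∑ l ∈ Finset.range i, d l / (S * ((S : ℝ) - l)) with hB
      have h1 : (0 : ℝ) ≤ (S : ℝ) - i - 1 := by
        have : (i : ℝ) + 1 < S := by exact_mod_cast hi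
        linarith
      have h2 := hshrink.trans (mul_le_mul_of_nonneg_left hround h1)
      have h3 : ((S : ℝ) - i) * (S * ((S : ℝ) - (i + 1 : ℕ)) *
          (x / S + (∑ l ∈ Finset.range i, d l / (S * ((S : ℝ) - l)) + d i / (S * ((S : ℝ) - i)))))
          = ((S : ℝ) - i - 1) * (S * ((S : ℝ) - i) * B + d i) := by
        rw [← add_assoc, ← hB]
        push_cast
        field_simp
        ring
      rw [← h3] at h2
      exact le_of_mul_le_mul_left h2 hSi

/-! ### Bounds on the `p`-mean welfare, and the choice of `n₀` -/

lemma pMeanWelfare_le_one {n : ℕ} (hn : 0 < n) {p : ℝ} (hp : p ≤ -1) {u : Fin n → ℝ}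
    (hu : ∀ a, 0 ≤ u a) (hu1 : ∀ a, u a ≤ 1) : pMeanWelfare n p u ≤ 1 := by
  unfold pMeanWelfare
  split_ifs with h
  · exact zero_le_one
  · have hpos : ∀ a, 0 < u a := fun a =>
      lt_of_le_of_ne (hu a) fun h0 => h ⟨by linarith, a, h0.symm⟩
    have hnR : (0 : ℝ) < n := by exact_mod_cast hn
    refine rpow_le_one_of_one_le_of_nonpos ?_ (by apply div_nonpos_of_nonneg_of_nonpos <;> linarith)
    have h1 : ∑ _a : Fin n, (1 : ℝ) ≤ ∑ a, u a ^ p :=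
      Finset.sum_le_sum fun a _ => one_le_rpow_of_pos_of_le_one_of_nonpos (hpos a) (hu1 a)
        (by linarith)
    simp only [Finset.sum_const, Finset.card_univ, Fintype.card_fin, nsmul_eq_mul, mul_one] at h1
    rw [one_div, ← div_eq_inv_mul, le_div_iff₀ hnR]
    linarith

lemma le_OPTwelfare {n m : ℕ} (hn : 0 < n) {p : ℝ} (hp : p ≤ -1) {v : Fin m → Fin n → ℝ}
    (hv : ∀ k a, 0 ≤ v k a) (hv1 : ∀ a, ∑ k, v k a = 1) (y : Fin m → Fin n → ℝ)
    (hy : ∀ k a, 0 ≤ y k a) (hy1 : ∀ k, ∑ a, y k a ≤ 1) :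
    pMeanWelfare n p (fun a => ∑ k, v k a * y k a) ≤ OPTwelfare n m p v := by
  refine le_csSup ⟨1, ?_⟩ ⟨y, hy, hy1, rfl⟩
  rintro w ⟨z, hz, hz1, rfl⟩
  refine pMeanWelfare_le_one hn hp
    (fun a => Finset.sum_nonneg fun k _ => mul_nonneg (hv k a) (hz k a)) fun a => ?_
  rw [← hv1 a]
  refine Finset.sum_le_sum fun k _ => mul_le_of_le_one_right (hv k a) ?_
  exact (Finset.single_le_sum (fun b _ => hz k b) (Finset.mem_univ a)).trans (hz1 k)

/-- The tangent line inequality at `1` for the convex function `z ↦ z ^ p`, `p ≤ -1`. -/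
lemma tangent_le_rpow {p z : ℝ} (hp : p ≤ -1) (hz : 0 < z) : 1 + p * (z - 1) ≤ z ^ p := by
  have h1 : 0 < z⁻¹ := inv_pos.2 hz
  have h := one_add_mul_self_le_rpow_one_add (s := z⁻¹ - 1) (by linarith) (p := -p) (by linarith)
  rw [add_sub_cancel, inv_rpow hz.le, rpow_neg hz.le, inv_inv] at h
  have h2 : 2 ≤ z + z⁻¹ := by
    have : z * z⁻¹ = 1 := mul_inv_cancel₀ hz.ne'
    nlinarith [sq_nonneg (z - z⁻¹)]
  nlinarith

/-- A set of `S` agents whose average utility is at most `t` caps the `p`-mean welfare. -/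
lemma pMeanWelfare_le_of_subset {n S : ℕ} (hn : 0 < n) (hS : 0 < S) {p t : ℝ} (hp : p ≤ -1)
    (ht : 0 < t) {u : Fin n → ℝ} (hu : ∀ a, 0 ≤ u a) (L : Finset (Fin n)) (hL : L.card = S)
    (hsum : ∑ a ∈ L, u a ≤ S * t) :
    pMeanWelfare n p u ≤ ((n : ℝ) / S) ^ (-1 / p) * t := by
  unfold pMeanWelfare
  have hnR : (0 : ℝ) < n := by exact_mod_cast hn
  have hSR : (0 : ℝ) < S := by exact_mod_cast hS
  split_ifs with h
  · positivity
  · have hpos : ∀ a, 0 < u a := fun a =>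
      lt_of_le_of_ne (hu a) fun h0 => h ⟨by linarith, a, h0.symm⟩
    have h1 : S * t ^ p ≤ ∑ a, u a ^ p := by
      calc S * t ^ p ≤ ∑ a ∈ L, t ^ p * (1 + p * (u a / t - 1)) := by
            rw [← Finset.mul_sum, Finset.sum_add_distrib, ← Finset.mul_sum,
              Finset.sum_sub_distrib, ← Finset.sum_div]
            simp only [Finset.sum_const, hL, nsmul_eq_mul, mul_one]
            have h2 : (∑ a ∈ L, u a) / t ≤ S := by rwa [div_le_iff₀ ht]
            have h3 : 0 < t ^ p := rpow_pos_of_pos ht p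
            rw [mul_comm]
            refine mul_le_mul_of_nonneg_left ?_ h3.le
            nlinarith
        _ ≤ ∑ a ∈ L, u a ^ p := by
            refine Finset.sum_le_sum fun a _ => ?_
            have h2 := tangent_le_rpow hp (div_pos (hpos a) ht)
            have h3 : u a ^ p = t ^ p * (u a / t) ^ p := by
              rw [← mul_rpow ht.le (div_pos (hpos a) ht).le, mul_div_cancel₀ _ ht.ne']
            rw [h3]
            exact mul_le_mul_of_nonneg_left h2 (rpow_nonneg ht.le _)
        _ ≤ _ := Finset.sum_le_univ_sum_of_nonneg fun a => rpow_nonneg (hu a) _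
    have hp0 : p ≠ 0 := by linarith
    calc _ ≤ (((S : ℝ) / n) * t ^ p) ^ (1 / p) := by
          refine rpow_le_rpow_of_nonpos (by positivity) ?_
            (by apply div_nonpos_of_nonneg_of_nonpos <;> linarith)
          rw [div_mul_eq_mul_div, one_div, ← div_eq_inv_mul]
          gcongr
      _ = _ := by
          rw [mul_rpow (by positivity) (by positivity), ← rpow_mul ht.le, mul_one_div_cancel hp0,
            rpow_one, neg_div, rpow_neg (by positivity), ← inv_rpow (by positivity), inv_div]

lemma le_pMeanWelfare {n : ℕ} (hn : 0 < n) {p K : ℝ} (hp : p ≤ -1) (hK : 1 ≤ K) {u : Fin n → ℝ}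
    (hu : ∀ a, 0 < u a) (hsum : ∑ a, u a ^ p ≤ n * (2 ^ (-p) * K)) :
    1 / (2 * K) ≤ pMeanWelfare n p u := by
  have hnR : (0 : ℝ) < n := by exact_mod_cast hn
  have hp0 : p ≠ 0 := by linarith
  unfold pMeanWelfare
  rw [if_neg (by rintro ⟨_, a, ha⟩; exact (hu a).ne' ha)]
  have : Nonempty (Fin n) := ⟨⟨0, hn⟩⟩
  have hs : 0 < ∑ a, u a ^ p :=
    Finset.sum_pos (fun a _ => rpow_pos_of_pos (hu a) p) Finset.univ_nonempty
  calc 1 / (2 * K) = 2⁻¹ * K ^ (-1 : ℝ) := by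
        rw [rpow_neg_one, one_div, mul_inv]
    _ ≤ 2⁻¹ * K ^ (1 / p) := by
        refine mul_le_mul_of_nonneg_left ?_ (by norm_num)
        refine rpow_le_rpow_of_exponent_le hK ?_
        rw [le_div_iff_of_neg (by linarith)]
        linarith
    _ = (2 ^ (-p) * K) ^ (1 / p) := by
        rw [mul_rpow (by positivity) (by positivity), ← rpow_mul (by norm_num)]
        congr 1
        rw [neg_mul, mul_one_div_cancel hp0, rpow_neg_one]
    _ ≤ _ := by
        refine rpow_le_rpow_of_nonpos (by positivity) ?_
            (by apply div_nonpos_of_nonneg_of_nonpos <;> linarith)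
        rw [one_div, ← div_eq_inv_mul, div_le_iff₀ hnR]
        linarith

lemma eventually_log_bound {ε : ℝ} (hε : 0 < ε) :
    ∀ᶠ n : ℕ in Filter.atTop, 16 * (3 + Real.log n) ^ 2 ≤ (n : ℝ) ^ ε := by
  have h1 : (fun x : ℝ => 3 + Real.log x) =o[Filter.atTop] fun x : ℝ => x ^ (ε / 2) := by
    refine Asymptotics.IsLittleO.add ?_ (isLittleO_log_rpow_atTop (by positivity))
    rw [Asymptotics.isLittleO_const_left]
    right
    exact tendsto_norm_atTop_atTop.comp (tendsto_rpow_atTop (by positivity))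
  have h2 := (h1.def (c := 1 / 4) (by norm_num)).and (Filter.eventually_ge_atTop 1)
  filter_upwards [tendsto_natCast_atTop_atTop.eventually h2] with n hn
  obtain ⟨hn, hn1⟩ := hn
  have hl : 0 ≤ Real.log n := log_nonneg hn1
  have hpos : (0 : ℝ) < n := by linarith
  rw [norm_of_nonneg (by positivity), norm_of_nonneg (by positivity)] at hn
  have h3 : (n : ℝ) ^ ε = ((n : ℝ) ^ (ε / 2)) ^ 2 := by
    rw [← rpow_natCast, ← rpow_mul hpos.le]
    congr 1
    push_cast
    ring
  rw [h3]
  nlinarith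

/-! ### The hard instance -/

/-- The fraction `(S - l) / S` of each group that is still present after `l` rounds, raised to the
power `α`; up to a constant, this is the budget a survivor has left at that time. -/
noncomputable def budget (S : ℕ) (α : ℝ) (l : ℕ) : ℝ := (((S - l : ℕ) : ℝ) / S) ^ α

lemma budget_zero {S : ℕ} (hS : 0 < S) (α : ℝ) : budget S α 0 = 1 := by
  have hSR : (S : ℝ) ≠ 0 := by exact_mod_cast hS.ne'
  simp [budget, hSR]

lemma budget_succ_le (S : ℕ) {α : ℝ} (hα : 0 ≤ α) (l : ℕ) :
    budget S α (l + 1) ≤ budget S α l := by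
  unfold budget
  refine rpow_le_rpow (by positivity) ?_ hα
  gcongr
  omega

lemma budget_le_succ_add (S : ℕ) {α : ℝ} (hα : 0 ≤ α) (hα1 : α ≤ 1) (l : ℕ) :
    budget S α l ≤ budget S α (l + 1) + (1 / (S : ℝ)) ^ α := by
  unfold budget
  refine le_trans ?_ (rpow_add_le_add_rpow (by positivity) (by positivity) hα hα1)
  refine rpow_le_rpow (by positivity) ?_ hα
  rw [← add_div]
  gcongr
  have : S - l ≤ (S - (l + 1)) + 1 := by omega
  exact_mod_cast this

/-- The adversarial stream followed by one private item for each agent, item `2 * S + a` being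
worth `priv a` to agent `a` only. -/
noncomputable def fullItem {n : ℕ} (S : ℕ) (x : ℝ) (d : ℕ → ℝ) (τ : Fin n → ℕ) (priv : Fin n → ℝ)
    (k : ℕ) (a : Fin n) : ℝ :=
  if k < S + S then advItem S x d τ k a else if k - (S + S) = a.1 then priv a else 0

lemma sum_fullItem {n S : ℕ} {x : ℝ} {d : ℕ → ℝ} {τ : Fin n → ℕ} {priv : Fin n → ℝ} (a : Fin n)
    (hτ : τ a ≤ S) :
    ∑ k ∈ Finset.range (S + S + n), fullItem S x d τ priv k a
      = (if a.1 / S < S then x else 0) + ∑ l ∈ Finset.range (τ a), d l + priv a := by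
  rw [Finset.sum_range_add, Finset.sum_range_add]
  congr 1
  · congr 1
    · rw [Finset.sum_congr rfl (g := fun k => if a.1 / S = k then x else 0)]
      · rw [Finset.sum_ite_eq]
        simp only [Finset.mem_range]
      · intro k hk
        have hk := Finset.mem_range.1 hk
        simp only [fullItem, advItem, hk, if_true]
        rw [if_pos (by omega)]
    · rw [Finset.sum_congr rfl (g := fun l => if l < τ a then d l else 0)]
      · rw [← Finset.sum_filter]
        congr 1
        ext l
        simp only [Finset.mem_filter, Finset.mem_range]
        omega
      · intro l hl
        have hl := Finset.mem_range.1 hl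
        unfold fullItem advItem
        rw [if_pos (by omega), if_neg (by omega), Nat.add_sub_cancel_left]
  · rw [Finset.sum_eq_single a.1]
    · simp [fullItem]
    · intro l _ hl
      simp [fullItem, hl]
    · intro h
      exact absurd (Finset.mem_range.2 a.2) h

/-- The adversary's instance for a fixed algorithm and a fixed exponent: the optimum is
`Ω(1 / log S)` whereas the algorithm only gets `O(log S / S)`. -/
lemma exists_instance {n S : ℕ} (hS : 0 < S) (hn : S * S ≤ n) (hn4 : n ≤ 4 * (S * S)) {p : ℝ}
    (hp : p ≤ -1) (A : (k : ℕ) → (Fin (k + 1) → Fin n → ℝ) → (Fin n → ℝ))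
    (hA : ∀ k h, (∀ a, 0 ≤ A k h a) ∧ ∑ a, A k h a ≤ 1) {H : ℝ}
    (hH : H = ∑ l ∈ Finset.range S, 1 / ((S : ℝ) - l)) :
    ∃ m : ℕ, ∃ v : Fin m → Fin n → ℝ,
      (∀ k a, 0 ≤ v k a) ∧ (∀ a, ∑ k, v k a = 1) ∧
      1 / (2 * (2 + H)) ≤ OPTwelfare n m p v ∧ ALGwelfare n m p A v ≤ 4 * (2 + H) / S := by
  have hSR : (0 : ℝ) < S := by exact_mod_cast hS
  have hS1 : (1 : ℝ) ≤ S := by exact_mod_cast hS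
  have hn0 : 0 < n := lt_of_lt_of_le (Nat.mul_pos hS hS) hn
  have hnR : (0 : ℝ) < n := by exact_mod_cast hn0
  have hp0 : p ≠ 0 := by linarith
  obtain ⟨α, hα⟩ : ∃ α : ℝ, α = -1 / p := ⟨_, rfl⟩
  have hα0 : 0 < α := by rw [hα]; apply div_pos_of_neg_of_neg <;> linarith
  have hα1 : α ≤ 1 := by rw [hα, div_le_one_of_neg (by linarith)]; exact hp
  have hαp : α * p = -1 := by rw [hα]; field_simp
  obtain ⟨q, hq⟩ : ∃ q : ℝ, q = (1 / (S : ℝ)) ^ α := ⟨_, rfl⟩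
  have hq0 : 0 < q := by rw [hq]; positivity
  have hq1 : q ≤ 1 := by
    rw [hq]
    refine rpow_le_one (by positivity) ?_ hα0.le
    rw [div_le_one hSR]; exact hS1
  have hbud : ∀ l, 0 ≤ budget S α l := fun l => by unfold budget; positivity
  obtain ⟨d, hd⟩ : ∃ d : ℕ → ℝ, d = fun l =>
    (1 - q / 2) * (budget S α l - budget S α (l + 1)) := ⟨_, rfl⟩
  have hd0 : ∀ l, 0 ≤ d l := fun l => by
    rw [hd]
    exact mul_nonneg (by linarith) (sub_nonneg.2 (budget_succ_le S hα0.le l))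
  have hdq : ∀ l, d l ≤ q := fun l => by
    have h1 := budget_le_succ_add S hα0.le hα1 l
    have h2 := budget_succ_le S hα0.le l
    rw [← hq] at h1
    rw [hd]
    simp only
    nlinarith
  have hdsum : ∀ t, ∑ l ∈ Finset.range t, d l = (1 - q / 2) * (1 - budget S α t) := fun t => by
    rw [hd, ← Finset.mul_sum, Finset.sum_range_sub', budget_zero hS]
  obtain ⟨τ, hout, hin, hcard, hgrp, hsum⟩ := exists_schedule A hA hS hn (q / 2) (by linarith)
    d hd0 (S - 1) (by omega)
  have hτle : ∀ a, τ a ≤ S := fun a => by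
    by_cases h : a.1 / S < S
    · rcases hin a h with h | h <;> omega
    · have := hout a (not_lt.1 h); omega
  have hins : ∀ a, τ a = S → a.1 / S < S := fun a ha => by
    by_contra hc
    have := hout a (not_lt.1 hc); omega
  set L := Finset.univ.filter fun a => τ a = S with hL
  have hLcard : L.card = S := by
    rw [Finset.card_eq_sum_card_fiberwise (f := fun a : Fin n => a.1 / S) (t := Finset.range S)]
    · rw [Finset.sum_congr rfl fun j hj => hgrp j (Finset.mem_range.1 hj)]
      simp only [Finset.sum_const, Finset.card_range, smul_eq_mul]
      rw [Nat.sub_sub_self hS]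
      exact mul_one S
    · intro a ha
      simp only [hL, Finset.coe_filter, Finset.mem_univ, true_and, Set.mem_ofPred_eq] at ha
      simpa using hins a ha
  obtain ⟨priv, hpriv⟩ : ∃ priv : Fin n → ℝ, priv = fun a =>
    if a.1 / S < S then (1 - q / 2) * budget S α (τ a) else 1 := ⟨_, rfl⟩
  have hpriv0 : ∀ a, 0 ≤ priv a := fun a => by
    rw [hpriv]
    simp only
    split_ifs
    · exact mul_nonneg (by linarith) (hbud _)
    · exact zero_le_one
  have hprivL : ∀ a ∈ L, priv a = 0 := fun a ha => by
    have h1 : τ a = S := by simpa [hL] using ha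
    rw [hpriv]
    simp only [hins a h1, if_true, h1]
    simp [budget, zero_rpow hα0.ne']
  obtain ⟨w, hw⟩ : ∃ w : ℕ → Fin n → ℝ, w = fullItem S (q / 2) d τ priv := ⟨_, rfl⟩
  have hw0 : ∀ k a, 0 ≤ w k a := fun k a => by
    rw [hw]
    unfold fullItem advItem
    split_ifs
    all_goals first | exact le_rfl | exact hd0 _ | exact hpriv0 _ | linarith
  have hwsum : ∀ a, ∑ k : Fin (S + S + n), w k a = 1 := fun a => by
    rw [Fin.sum_univ_eq_sum_range (fun k => w k a), hw, sum_fullItem a (hτle a), hdsum, hpriv]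
    simp only
    split_ifs with h
    · ring
    · rw [hout a (not_lt.1 h), budget_zero hS]; ring
  have hH0 : 0 ≤ H := by
    rw [hH]
    refine Finset.sum_nonneg fun l hl => ?_
    have : (l : ℝ) < S := by exact_mod_cast Finset.mem_range.1 hl
    exact div_nonneg zero_le_one (by linarith)
  refine ⟨S + S + n, fun k => w k, fun k a => hw0 k a, hwsum, ?_, ?_⟩
  · -- hindsight: survivors take their group's item, everyone else the private item
    obtain ⟨y, hy⟩ : ∃ y : ℕ → Fin n → ℝ, y = fun k a =>
      if k < S then (if τ a = S ∧ a.1 / S = k then 1 else 0)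
      else if k < S + S then 0 else if k - (S + S) = a.1 then 1 else 0 := ⟨_, rfl⟩
    have hy0 : ∀ k a, 0 ≤ y k a := fun k a => by
      rw [hy]
      simp only
      split_ifs <;> norm_num
    have hy1 : ∀ k, ∑ a, y k a ≤ 1 := fun k => by
      rw [hy]
      simp only
      split_ifs with h1 h2
      · rw [Finset.sum_boole, ← Finset.filter_filter, hgrp k h1, Nat.sub_sub_self hS]
        simp
      · simp
      · rw [Finset.sum_boole]
        have : (Finset.univ.filter fun a : Fin n => k - (S + S) = a.1).card ≤ 1 := by
          rw [Finset.card_le_one]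
          intro a ha b hb
          simp only [Finset.mem_filter, Finset.mem_univ, true_and] at ha hb
          ext; omega
        exact_mod_cast this
    refine le_trans ?_ (le_OPTwelfare hn0 hp (fun k a => hw0 k a) hwsum (fun k => y k)
      (fun k a => hy0 k a) fun k => hy1 k)
    -- an agent with `τ a = t` has hindsight utility at least `h t ^ α / 2`
    obtain ⟨h, hh⟩ : ∃ h : ℕ → ℝ, h = fun t =>
      if t < S then ((S - t : ℕ) : ℝ) / S else 1 / S := ⟨_, rfl⟩
    have hhpos : ∀ t, 0 < h t := fun t => by
      rw [hh]
      simp only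
      split_ifs with ht
      · have : 0 < S - t := by omega
        have : (0 : ℝ) < ((S - t : ℕ) : ℝ) := by exact_mod_cast this
        positivity
      · positivity
    have hlow : ∀ a, 1 / 2 * h (τ a) ^ α ≤ ∑ k : Fin (S + S + n), w k a * y k a := fun a => by
      have hterm : ∀ k, k < S + S + n →
          w k a * y k a ≤ ∑ k : Fin (S + S + n), w k a * y k a := fun k hk =>
        Finset.single_le_sum (f := fun k : Fin (S + S + n) => w k a * y k a)
          (fun k _ => mul_nonneg (hw0 k a) (hy0 k a)) (Finset.mem_univ ⟨k, hk⟩)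
      by_cases hτS : τ a = S
      · have h1 := hins a hτS
        refine le_trans ?_ (hterm (a.1 / S) (by omega))
        rw [hw, hy, hh]
        simp only [fullItem, advItem, hτS, h1, lt_irrefl, if_true, if_false, true_and]
        rw [if_pos (by omega), ← hq]
        linarith
      · refine le_trans ?_ (hterm (S + S + a.1) (by have := a.2; omega))
        have h1 : τ a < S := lt_of_le_of_ne (hτle a) hτS
        have h2 : w (S + S + a.1) a * y (S + S + a.1) a = priv a := by
          have hk1 : ¬ S + S + a.1 < S := by omega
          have hk2 : ¬ S + S + a.1 < S + S := by omega
          have hk3 : S + S + a.1 - (S + S) = a.1 := by omega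
          rw [hw, hy]
          simp only [fullItem, hk1, hk2, hk3, if_true, if_false, mul_one]
        rw [h2, hpriv, hh]
        simp only [h1, if_true]
        split_ifs with h3
        · have := hbud (τ a)
          unfold budget at this ⊢
          nlinarith
        · rw [hout a (not_lt.1 h3), Nat.sub_zero, div_self hSR.ne', one_rpow]
          norm_num
    have hlowpos : ∀ a, 0 < 1 / 2 * h (τ a) ^ α := fun a => by
      have := rpow_pos_of_pos (hhpos (τ a)) α
      positivity
    refine le_pMeanWelfare hn0 hp (by linarith) (fun a => (hlowpos a).trans_le (hlow a)) ?_
    calc ∑ a, (∑ k : Fin (S + S + n), w k a * y k a) ^ p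
        ≤ ∑ a, 2 ^ (-p) * (h (τ a))⁻¹ := by
          refine Finset.sum_le_sum fun a _ => ?_
          refine (rpow_le_rpow_of_nonpos (hlowpos a) (hlow a) (by linarith)).trans_eq ?_
          rw [mul_rpow (by norm_num) (rpow_nonneg (hhpos _).le _), ← rpow_mul (hhpos _).le, hαp,
            rpow_neg_one, one_div, inv_rpow (by norm_num), rpow_neg (by norm_num)]
      _ = 2 ^ (-p) * ∑ a, (h (τ a))⁻¹ := by rw [Finset.mul_sum]
      _ ≤ 2 ^ (-p) * (n * (2 + H)) := by
          refine mul_le_mul_of_nonneg_left ?_ (by positivity)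
          have hfib : ∑ a, (h (τ a))⁻¹ = ∑ t ∈ Finset.range (S + 1),
              ((Finset.univ.filter fun a => τ a = t).card : ℝ) * (h t)⁻¹ := by
            rw [← Finset.sum_fiberwise_of_maps_to (t := Finset.range (S + 1)) (g := τ)
              (fun a _ => Finset.mem_range.2 (Nat.lt_succ_of_le (hτle a)))]
            refine Finset.sum_congr rfl fun t _ => ?_
            rw [Finset.sum_congr rfl (g := fun _ => (h t)⁻¹)]
            · simp
            · intro a ha
              rw [(Finset.mem_filter.1 ha).2]
          have hlast : (h S)⁻¹ = S := by rw [hh]; simp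
          have hterm : ∀ t ∈ Finset.range S,
              ((Finset.univ.filter fun a => τ a = t).card : ℝ) * (h t)⁻¹
                ≤ (if t = 0 then (n : ℝ) else 0) + S * S * (1 / ((S : ℝ) - t)) := by
            intro t ht
            have ht := Finset.mem_range.1 ht
            have htR : (t : ℝ) < S := by exact_mod_cast ht
            have hht : (h t)⁻¹ = S / ((S : ℝ) - t) := by
              rw [hh]
              simp only [ht, if_true]
              rw [inv_div, Nat.cast_sub ht.le]
            rw [hht]
            split_ifs with h0
            · have h1 : ((Finset.univ.filter fun a => τ a = t).card : ℝ) ≤ n := by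
                have := Finset.card_le_univ (Finset.univ.filter fun a => τ a = t)
                rw [Fintype.card_fin] at this
                exact_mod_cast this
              rw [h0, Nat.cast_zero, sub_zero, div_self hSR.ne', mul_one, ← h0]
              have : 0 ≤ (S : ℝ) * S * (1 / S) := by positivity
              linarith
            · rw [hcard t (by omega) (by omega), zero_add]
              apply le_of_eq
              ring
          rw [hfib, Finset.sum_range_succ, ← hL, hLcard, hlast]
          have h1 := Finset.sum_le_sum hterm
          rw [Finset.sum_add_distrib, ← Finset.mul_sum, ← hH, Finset.sum_ite_eq'] at h1
          rw [if_pos (Finset.mem_range.2 hS)] at h1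
          have h2 : (S : ℝ) * S ≤ n := by exact_mod_cast hn
          nlinarith
      _ = _ := by ring
  · -- the algorithm's welfare is capped by the survivors
    have hpred : S + (S - 1) + 1 = S + S := by omega
    have hcong : ∀ a ∈ L, onlineUtilities n (S + S + n) A (fun k => w k) a
        = utilUpTo A (advItem S (q / 2) d τ) (S + (S - 1) + 1) a := by
      intro a ha
      have h1 : onlineUtilities n (S + S + n) A (fun k => w k) a
          = utilUpTo A w (S + S + n) a := by
        unfold onlineUtilities utilUpTo
        exact Fin.sum_univ_eq_sum_range (fun k => w k a * A k (fun i => w i) a) (S + S + n)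
      rw [h1, hpred]
      have h2 : utilUpTo A w (S + S + n) a = utilUpTo A w (S + S) a := by
        unfold utilUpTo
        rw [Finset.sum_range_add, add_eq_left]
        refine Finset.sum_eq_zero fun l _ => ?_
        have : w (S + S + l) a = 0 := by
          rw [hw]
          unfold fullItem
          rw [if_neg (by omega), hprivL a ha]
          simp
        rw [this, zero_mul]
      rw [h2]
      refine utilUpTo_congr A (fun k hk => ?_) a
      funext b
      rw [hw]
      simp only [fullItem, hk, if_true]
    have hLsum : ∑ a ∈ L, onlineUtilities n (S + S + n) A (fun k => w k) a
        ≤ S * (q * (2 + H) / S) := by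
      rw [Finset.sum_congr rfl hcong]
      refine (sum_utilUpTo_succ_le A hA _ _ hq0.le (fun a => ?_) L).trans ?_
      · unfold advItem
        rw [if_neg (by omega)]
        split_ifs
        · exact hdq _
        · exact hq0.le
      · have h1 : ∑ l ∈ Finset.range (S - 1), d l / (S * ((S : ℝ) - l)) ≤ q / S * (H - 1) := by
          have h2 : H - 1 = ∑ l ∈ Finset.range (S - 1), 1 / ((S : ℝ) - l) := by
            obtain ⟨s, rfl⟩ : ∃ s, S = s + 1 := ⟨S - 1, by omega⟩
            rw [hH, Finset.sum_range_succ]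
            simp
          rw [h2, Finset.mul_sum]
          refine Finset.sum_le_sum fun l hl => ?_
          have : (l : ℝ) < S := by
            have := Finset.mem_range.1 hl
            exact_mod_cast (by omega : l < S)
          rw [div_mul_div_comm, mul_one]
          have h3 : (0 : ℝ) < S * ((S : ℝ) - l) := mul_pos hSR (by linarith)
          exact div_le_div_of_nonneg_right (hdq l) h3.le
        have h3 : (S : ℝ) - ((S - 1 : ℕ) : ℝ) = 1 := by
          rw [Nat.cast_sub hS]; simp
        rw [h3, mul_one] at hsum
        have h4 : S * (q / 2 / S + q / S * (H - 1)) = q / 2 + q * (H - 1) := by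
          field_simp
        have h5 := mul_le_mul_of_nonneg_left (add_le_add_right h1 (q / 2 / S)) hSR.le
        rw [mul_div_cancel₀ _ hSR.ne']
        nlinarith
    have hunn : ∀ a, 0 ≤ onlineUtilities n (S + S + n) A (fun k => w k) a := fun a =>
      Finset.sum_nonneg fun k _ => mul_nonneg (hw0 k a) ((hA _ _).1 a)
    refine (pMeanWelfare_le_of_subset hn0 hS hp (by positivity) hunn L hLcard hLsum).trans ?_
    rw [← hα]
    have h1 : ((n : ℝ) / S) ^ α * q ≤ 4 := by
      rw [hq, ← mul_rpow (by positivity) (by positivity)]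
      calc ((n : ℝ) / S * (1 / S)) ^ α ≤ (4 : ℝ) ^ α := by
            refine rpow_le_rpow (by positivity) ?_ hα0.le
            rw [div_mul_div_comm, mul_one, div_le_iff₀ (by positivity)]
            exact_mod_cast hn4
        _ ≤ (4 : ℝ) ^ (1 : ℝ) := rpow_le_rpow_of_exponent_le (by norm_num) hα1
        _ = 4 := rpow_one 4
    calc ((n : ℝ) / S) ^ α * (q * (2 + H) / S) = (((n : ℝ) / S) ^ α * q) * ((2 + H) / S) := by ring
      _ ≤ 4 * ((2 + H) / S) := mul_le_mul_of_nonneg_right h1 (by positivity)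
      _ = _ := by ring

lemma harmonicSum_le (S : ℕ) :
    ∑ l ∈ Finset.range S, 1 / ((S : ℝ) - l) ≤ 1 + Real.log S := by
  refine le_trans (le_of_eq ?_) (harmonic_le_one_add_log S)
  rw [← Finset.sum_range_reflect]
  unfold harmonic
  push_cast
  refine Finset.sum_congr rfl fun l hl => ?_
  have := Finset.mem_range.1 hl
  rw [show S - 1 - l = S - (l + 1) by omega, Nat.cast_sub (by omega), one_div]
  push_cast
  congr 1
  ring

/-! ### Comparing the optimum with the algorithm -/

theorem stmt_18 :
    ∀ ε : ℝ, 0 < ε →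
    ∃ n₀ : ℕ, ∀ n : ℕ, n₀ ≤ n →
    ∀ p : ℝ, p ≤ -1 →
    ∀ A : (k : ℕ) → (Fin (k + 1) → Fin n → ℝ) → (Fin n → ℝ),
      (∀ k h, (∀ a, 0 ≤ A k h a) ∧ ∑ a, A k h a ≤ 1) →
      ∃ m : ℕ, ∃ v : Fin m → Fin n → ℝ,
        (∀ k a, 0 ≤ v k a) ∧ (∀ a, ∑ k, v k a = 1) ∧
        OPTwelfare n m p v ≥
          (n : ℝ) ^ ((1 / 2 : ℝ) - ε) * ALGwelfare n m p A v := by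
  intro ε hε
  obtain ⟨N, hN⟩ := Filter.eventually_atTop.1 (eventually_log_bound hε)
  refine ⟨max N 1, fun n hn p hp A hA => ?_⟩
  have hn1 : 1 ≤ n := le_trans (le_max_right _ _) hn
  have hlog := hN n (le_trans (le_max_left _ _) hn)
  have hnR : (0 : ℝ) < n := by exact_mod_cast hn1
  obtain ⟨S, hSdef⟩ : ∃ S, S = Nat.sqrt n := ⟨_, rfl⟩
  have hS : 0 < S := hSdef ▸ Nat.sqrt_pos.2 hn1
  have hSR : (0 : ℝ) < S := by exact_mod_cast hS
  have hSn : S * S ≤ n := hSdef ▸ Nat.sqrt_le n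
  have hSn4 : n ≤ 4 * (S * S) := by
    have : n < (S + 1) * (S + 1) := hSdef ▸ Nat.lt_succ_sqrt n
    nlinarith
  obtain ⟨m, v, hv0, hv1, hopt, halg⟩ := exists_instance hS hSn hSn4 hp A hA rfl
  refine ⟨m, v, hv0, hv1, ?_⟩
  set H := ∑ l ∈ Finset.range S, 1 / ((S : ℝ) - l)
  have hH0 : 0 ≤ H := by
    refine Finset.sum_nonneg fun l hl => ?_
    have : (l : ℝ) < S := by exact_mod_cast Finset.mem_range.1 hl
    exact div_nonneg zero_le_one (by linarith)
  have hH : 2 + H ≤ 3 + Real.log n := by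
    have h1 : H ≤ 1 + Real.log S := harmonicSum_le S
    have h2 : Real.log S ≤ Real.log n := by
      refine Real.log_le_log hSR ?_
      exact_mod_cast (Nat.le_mul_of_pos_left S hS).trans hSn
    linarith
  have hroot : (n : ℝ) ^ (1 / 2 : ℝ) ≤ 2 * S := by
    rw [← Real.sqrt_eq_rpow]
    refine Real.sqrt_le_iff.2 ⟨by positivity, ?_⟩
    have : (n : ℝ) ≤ 4 * (S * S) := by exact_mod_cast hSn4
    nlinarith
  have hsq : 16 * (2 + H) ^ 2 ≤ (n : ℝ) ^ ε := by
    refine le_trans ?_ hlog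
    gcongr
  have hnε : 0 < (n : ℝ) ^ ε := rpow_pos_of_pos hnR ε
  refine ge_iff_le.2 (le_trans ?_ hopt)
  calc (n : ℝ) ^ ((1 / 2 : ℝ) - ε) * ALGwelfare n m p A v
      ≤ (n : ℝ) ^ ((1 / 2 : ℝ) - ε) * (4 * (2 + H) / S) := by gcongr
    _ = (n : ℝ) ^ (1 / 2 : ℝ) / (n : ℝ) ^ ε * (4 * (2 + H) / S) := by rw [rpow_sub hnR]
    _ ≤ 2 * S / (n : ℝ) ^ ε * (4 * (2 + H) / S) := by gcongr
    _ = 8 * (2 + H) / (n : ℝ) ^ ε := by field_simp; ring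
    _ ≤ 1 / (2 * (2 + H)) := by
      rw [div_le_div_iff₀ hnε (by positivity)]
      linarith
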